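/- For every τ₀ > 0 there exists a constant C₀ ∈ (0,1] such that for every continuous nonnegative function φ : [0,∞) → ℝ and all t > 0 and r > τ₀/2: I(t,r,φ) ≥ (C₀/√(sinh r)) ∫_{max(t,r)}^{t+r} φ(λ) √(sinh λ) dλ. -/

import Mathlib

open MeasureTheory intervalIntegral

/-- The radial form, at geodesic radius `r` and time `t`, of the solution of the shifted
wave equation on the hyperbolic plane with data `u(0) = 0`, `∂ₜu(0) = φ`. -/
noncomputable def Isol (t r : ℝ) (φ : ℝ → ℝ) : ℝ :=
  (1 / (Real.pi * Real.sqrt 2)) *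
    ∫ s in (0 : ℝ)..t, ∫ l in |r - s|..(r + s),
      φ l * Real.sinh l * Real.sinh s *
        ((Real.cosh t - Real.cosh s) * (Real.cosh (r + s) - Real.cosh l) *
          (Real.cosh l - Real.cosh (r - s))) ^ (-(1 / 2) : ℝ)

open Set

/-- The integrand of `Isol` without the initial datum. -/
noncomputable def waveKernel (t r s l : ℝ) : ℝ :=
  Real.sinh l * Real.sinh s *
    ((Real.cosh t - Real.cosh s) * (Real.cosh (r + s) - Real.cosh l) *
      (Real.cosh l - Real.cosh (r - s))) ^ (-(1 / 2) : ℝ)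

/-- The domain of integration of `Isol`, as a set of pairs `(s, l)`. -/
def waveDomain (t r : ℝ) : Set (ℝ × ℝ) :=
  {p | 0 < p.1 ∧ p.1 < t ∧ |r - p.1| < p.2 ∧ p.2 < r + p.1}

/-- The part of `waveDomain t r` over the interval `(max t r, t + r)` in the second variable. -/
def waveSubdomain (t r : ℝ) : Set (ℝ × ℝ) :=
  {p | max t r < p.2 ∧ p.2 < t + r ∧ p.2 - r < p.1 ∧ p.1 < t}

lemma measurableSet_waveDomain (t r : ℝ) : MeasurableSet (waveDomain t r) := by
  simp only [waveDomain, ofPred_and]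
  refine IsOpen.measurableSet (IsOpen.inter ?_ (IsOpen.inter ?_ (IsOpen.inter ?_ ?_))) <;>
    exact isOpen_lt (by fun_prop) (by fun_prop)

lemma measurableSet_waveSubdomain (t r : ℝ) : MeasurableSet (waveSubdomain t r) := by
  simp only [waveSubdomain, ofPred_and]
  refine IsOpen.measurableSet (IsOpen.inter ?_ (IsOpen.inter ?_ (IsOpen.inter ?_ ?_))) <;>
    exact isOpen_lt (by fun_prop) (by fun_prop)

lemma waveSubdomain_subset (t r : ℝ) : waveSubdomain t r ⊆ waveDomain t r := by
  rintro ⟨s, l⟩ ⟨h1, h2, h3, h4⟩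
  simp only [max_lt_iff] at h1 h2 h3 h4
  refine ⟨by simp only; linarith, h4, abs_lt.2 ⟨by simp only; linarith, by simp only; linarith⟩,
    by simp only; linarith⟩

lemma measurable_waveKernel (t r : ℝ) :
    Measurable fun p : ℝ × ℝ => waveKernel t r p.1 p.2 := by
  unfold waveKernel
  fun_prop

lemma cosh_lt_cosh_of_nonneg {a b : ℝ} (ha : 0 ≤ a) (hab : a < b) :
    Real.cosh a < Real.cosh b := by
  rw [Real.cosh_lt_cosh, abs_of_nonneg ha, abs_of_pos (by linarith)]
  exact hab

lemma rpow_neg_half (x : ℝ) (hx : 0 ≤ x) : x ^ (-(1 / 2) : ℝ) = (√x)⁻¹ := by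
  rw [Real.rpow_neg hx, Real.sqrt_eq_rpow]

lemma hasDerivAt_arcsin_cosh {a b x : ℝ} (ha : 0 ≤ a) (hx : x ∈ Ioo a b) :
    HasDerivAt (fun y => Real.arcsin
        ((2 * Real.cosh y - Real.cosh b - Real.cosh a) / (Real.cosh b - Real.cosh a)))
      (Real.sinh x *
        ((Real.cosh b - Real.cosh x) * (Real.cosh x - Real.cosh a)) ^ (-(1 / 2) : ℝ)) x := by
  have h1 := cosh_lt_cosh_of_nonneg ha hx.1
  have h2 := cosh_lt_cosh_of_nonneg (ha.trans hx.1.le) hx.2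
  have hd : 0 < Real.cosh b - Real.cosh a := by linarith
  have hu : HasDerivAt
      (fun y => (2 * Real.cosh y - Real.cosh b - Real.cosh a) / (Real.cosh b - Real.cosh a))
      (2 * Real.sinh x / (Real.cosh b - Real.cosh a)) x :=
    ((((Real.hasDerivAt_cosh x).const_mul 2).sub_const _).sub_const _).div_const _
  have hl : (2 * Real.cosh x - Real.cosh b - Real.cosh a) / (Real.cosh b - Real.cosh a) ≠ -1 := by
    rw [ne_eq, div_eq_iff hd.ne']
    intro h; linarith
  have hr : (2 * Real.cosh x - Real.cosh b - Real.cosh a) / (Real.cosh b - Real.cosh a) ≠ 1 := by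
    rw [ne_eq, div_eq_iff hd.ne']
    intro h; linarith
  have hp : 0 < (Real.cosh b - Real.cosh x) * (Real.cosh x - Real.cosh a) :=
    mul_pos (by linarith) (by linarith)
  refine ((Real.hasDerivAt_arcsin hl hr).comp x hu).congr_deriv ?_
  have hs : √(1 - ((2 * Real.cosh x - Real.cosh b - Real.cosh a) /
        (Real.cosh b - Real.cosh a)) ^ 2) =
      2 * √((Real.cosh b - Real.cosh x) * (Real.cosh x - Real.cosh a)) /
        (Real.cosh b - Real.cosh a) := by
    rw [Real.sqrt_eq_iff_eq_sq _ (by positivity), div_pow, div_pow, mul_pow, Real.sq_sqrt hp.le]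
    · field_simp
      ring
    · have : 1 - ((2 * Real.cosh x - Real.cosh b - Real.cosh a) /
          (Real.cosh b - Real.cosh a)) ^ 2 =
          4 * ((Real.cosh b - Real.cosh x) * (Real.cosh x - Real.cosh a)) /
            (Real.cosh b - Real.cosh a) ^ 2 := by
        field_simp
        ring
      rw [this]
      positivity
  have := Real.sqrt_pos.2 hp
  rw [hs, rpow_neg_half _ hp.le]
  field_simp

lemma continuous_arcsin_cosh (a b : ℝ) : Continuous (fun y => Real.arcsin
    ((2 * Real.cosh y - Real.cosh b - Real.cosh a) / (Real.cosh b - Real.cosh a))) := by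
  have := Real.continuous_cosh
  have := Real.continuous_arcsin
  fun_prop

lemma intervalIntegrable_sinh_mul_rpow {a b : ℝ} (ha : 0 ≤ a) (hab : a < b) :
    IntervalIntegrable (fun x => Real.sinh x *
      ((Real.cosh b - Real.cosh x) * (Real.cosh x - Real.cosh a)) ^ (-(1 / 2) : ℝ))
      volume a b := by
  rw [intervalIntegrable_iff_integrableOn_Ioc_of_le hab.le]
  refine integrableOn_deriv_of_nonneg (continuous_arcsin_cosh a b).continuousOn
    (fun x hx => hasDerivAt_arcsin_cosh ha hx) fun x hx => ?_
  have h1 := cosh_lt_cosh_of_nonneg ha hx.1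
  have h2 := cosh_lt_cosh_of_nonneg (ha.trans hx.1.le) hx.2
  exact mul_nonneg (Real.sinh_nonneg_iff.2 (ha.trans hx.1.le))
    (Real.rpow_nonneg (mul_nonneg (by linarith) (by linarith)) _)

lemma integral_sinh_mul_rpow {a b : ℝ} (ha : 0 ≤ a) (hab : a < b) :
    ∫ x in a..b, Real.sinh x *
      ((Real.cosh b - Real.cosh x) * (Real.cosh x - Real.cosh a)) ^ (-(1 / 2) : ℝ) =
      Real.pi := by
  have h1 := cosh_lt_cosh_of_nonneg ha hab
  have hd : 0 < Real.cosh b - Real.cosh a := by linarith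
  rw [integral_eq_sub_of_hasDerivAt_of_le hab.le (continuous_arcsin_cosh a b).continuousOn
    (fun x hx => hasDerivAt_arcsin_cosh ha hx) (intervalIntegrable_sinh_mul_rpow ha hab)]
  have e1 : (2 * Real.cosh b - Real.cosh b - Real.cosh a) / (Real.cosh b - Real.cosh a) = 1 := by
    rw [div_eq_one_iff_eq hd.ne']; ring
  have e2 : (2 * Real.cosh a - Real.cosh b - Real.cosh a) / (Real.cosh b - Real.cosh a) = -1 := by
    rw [div_eq_iff hd.ne']; ring
  rw [e1, e2, Real.arcsin_one, Real.arcsin_neg_one]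
  ring

lemma integrableOn_sinh_mul_rpow_cosh_sub (t : ℝ) :
    IntegrableOn (fun s => Real.sinh s * (Real.cosh t - Real.cosh s) ^ (-(1 / 2) : ℝ))
      (Ioc 0 t) := by
  refine integrableOn_deriv_of_nonneg (g := fun s => -2 * √(Real.cosh t - Real.cosh s))
    (Continuous.continuousOn (by fun_prop)) (fun s hs => ?_) fun s hs => ?_
  · have h := cosh_lt_cosh_of_nonneg hs.1.le hs.2
    have hp : 0 < Real.cosh t - Real.cosh s := by linarith
    refine ((((Real.hasDerivAt_cosh s).const_sub (Real.cosh t)).sqrt hp.ne').const_mul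
      (-2)).congr_deriv ?_
    rw [rpow_neg_half _ hp.le]
    have := Real.sqrt_pos.2 hp
    field_simp
  · have h := cosh_lt_cosh_of_nonneg hs.1.le hs.2
    exact mul_nonneg (Real.sinh_nonneg_iff.2 hs.1.le) (Real.rpow_nonneg (by linarith) _)

lemma cosh_factors_pos {t r s l : ℝ} (h : (s, l) ∈ waveDomain t r) :
    0 < Real.cosh t - Real.cosh s ∧ 0 < Real.cosh (r + s) - Real.cosh l ∧
      0 < Real.cosh l - Real.cosh (r - s) := by
  obtain ⟨h1, h2, h3, h4⟩ := h
  have h5 := cosh_lt_cosh_of_nonneg (abs_nonneg _) h3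
  rw [Real.cosh_abs] at h5
  exact ⟨sub_pos.2 (cosh_lt_cosh_of_nonneg h1.le h2),
    sub_pos.2 (cosh_lt_cosh_of_nonneg ((abs_nonneg _).trans h3.le) h4), sub_pos.2 h5⟩

lemma waveKernel_nonneg {t r s l : ℝ} (h : (s, l) ∈ waveDomain t r) :
    0 ≤ waveKernel t r s l := by
  obtain ⟨h1, h2, h3⟩ := cosh_factors_pos h
  have hs : 0 ≤ s := h.1.le
  have hl : 0 ≤ l := (abs_nonneg _).trans h.2.2.1.le
  exact mul_nonneg (mul_nonneg (Real.sinh_nonneg_iff.2 hl) (Real.sinh_nonneg_iff.2 hs))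
    (Real.rpow_nonneg (by positivity) _)

lemma waveKernel_eq {t r s l : ℝ} (h : (s, l) ∈ waveDomain t r) :
    waveKernel t r s l =
      Real.sinh s * (Real.cosh t - Real.cosh s) ^ (-(1 / 2) : ℝ) * (Real.sinh l *
        ((Real.cosh (r + s) - Real.cosh l) *
          (Real.cosh l - Real.cosh |r - s|)) ^ (-(1 / 2) : ℝ)) := by
  obtain ⟨h1, h2, h3⟩ := cosh_factors_pos h
  rw [waveKernel, mul_assoc (Real.cosh t - Real.cosh s), Real.mul_rpow h1.le (by positivity),
    Real.cosh_abs]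
  ring

/-- The section of a function supported in `waveDomain t r` at a fixed first variable. -/
lemma indicator_waveDomain_section {t r s : ℝ} (hs : s ∈ Ioo 0 t) (f : ℝ × ℝ → ℝ) :
    (fun l => (waveDomain t r).indicator f (s, l)) =
      (Ioo |r - s| (r + s)).indicator fun l => f (s, l) := by
  ext l
  have : (s, l) ∈ waveDomain t r ↔ l ∈ Ioo |r - s| (r + s) :=
    ⟨fun h => h.2.2, fun h => ⟨hs.1, hs.2, h⟩⟩
  simp only [indicator, this]

lemma indicator_waveDomain_section_eq_zero {t r s : ℝ} (hs : s ∉ Ioo 0 t) (f : ℝ × ℝ → ℝ) :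
    (fun l => (waveDomain t r).indicator f (s, l)) = 0 := by
  ext l
  exact indicator_of_notMem (fun h => hs ⟨h.1, h.2.1⟩) _

lemma abs_sub_lt_add_of_pos {r s : ℝ} (hr : 0 < r) (hs : 0 < s) : |r - s| < r + s :=
  abs_lt.2 ⟨by linarith, by linarith⟩

lemma integrable_indicator_waveKernel (t : ℝ) {r : ℝ} (hr : 0 < r) :
    Integrable ((waveDomain t r).indicator fun p => waveKernel t r p.1 p.2)
      (volume.prod volume) := by
  have key (s : ℝ) (hs : s ∈ Ioo 0 t) :
      (fun l => (waveDomain t r).indicator (fun p => waveKernel t r p.1 p.2) (s, l)) =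
      (Ioo |r - s| (r + s)).indicator fun l =>
        Real.sinh s * (Real.cosh t - Real.cosh s) ^ (-(1 / 2) : ℝ) * (Real.sinh l *
        ((Real.cosh (r + s) - Real.cosh l) *
          (Real.cosh l - Real.cosh |r - s|)) ^ (-(1 / 2) : ℝ)) := by
    rw [indicator_waveDomain_section hs]
    exact indicator_congr fun l hl => waveKernel_eq ⟨hs.1, hs.2, hl⟩
  rw [integrable_prod_iff (((measurable_waveKernel t r).indicator
    (measurableSet_waveDomain t r)).aestronglyMeasurable)]
  constructor
  · refine Filter.Eventually.of_forall fun s => ?_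
    by_cases hs : s ∈ Ioo 0 t
    · rw [key s hs, integrable_indicator_iff measurableSet_Ioo,
        ← integrableOn_Ioc_iff_integrableOn_Ioo]
      have := abs_sub_lt_add_of_pos hr hs.1
      rw [← intervalIntegrable_iff_integrableOn_Ioc_of_le this.le]
      exact (intervalIntegrable_sinh_mul_rpow (abs_nonneg _) this).const_mul _
    · rw [indicator_waveDomain_section_eq_zero hs]
      exact integrable_zero _ _ _
  · have hnorm : ∀ p : ℝ × ℝ,
        ‖(waveDomain t r).indicator (fun p => waveKernel t r p.1 p.2) p‖ =
          (waveDomain t r).indicator (fun p => waveKernel t r p.1 p.2) p := fun p =>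
      Real.norm_of_nonneg (indicator_nonneg (fun p hp => waveKernel_nonneg hp) p)
    simp_rw [hnorm]
    have : (fun s => ∫ l, (waveDomain t r).indicator (fun p => waveKernel t r p.1 p.2) (s, l)) =
        (Ioo 0 t).indicator fun s =>
          Real.sinh s * (Real.cosh t - Real.cosh s) ^ (-(1 / 2) : ℝ) * Real.pi := by
      ext s
      by_cases hs : s ∈ Ioo 0 t
      · have h := abs_sub_lt_add_of_pos hr hs.1
        rw [key s hs, MeasureTheory.integral_indicator measurableSet_Ioo,
          ← integral_Ioc_eq_integral_Ioo,
          ← intervalIntegral.integral_of_le h.le, intervalIntegral.integral_const_mul,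
          integral_sinh_mul_rpow (abs_nonneg _) h, indicator_of_mem hs]
      · rw [indicator_waveDomain_section_eq_zero hs, indicator_of_notMem hs]
        simp
    rw [this, integrable_indicator_iff measurableSet_Ioo, ← integrableOn_Ioc_iff_integrableOn_Ioo]
    exact (integrableOn_sinh_mul_rpow_cosh_sub t).mul_const _

lemma integrable_indicator_mul_waveKernel (t : ℝ) {r : ℝ} (hr : 0 < r) {φ : ℝ → ℝ}
    (hφ : Continuous φ) :
    Integrable ((waveDomain t r).indicator fun p => φ p.2 * waveKernel t r p.1 p.2)
      (volume.prod volume) := by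
  obtain ⟨M, hM⟩ := isCompact_Icc.exists_bound_of_continuousOn
    (hφ.continuousOn (s := Icc 0 (r + t)))
  refine ((integrable_indicator_waveKernel t hr).const_mul M).mono'
    (((hφ.measurable.comp measurable_snd).mul (measurable_waveKernel t r)).indicator
      (measurableSet_waveDomain t r)).aestronglyMeasurable
    (Filter.Eventually.of_forall fun p => ?_)
  by_cases hp : p ∈ waveDomain t r
  · rw [indicator_of_mem hp, indicator_of_mem hp, norm_mul,
      Real.norm_of_nonneg (waveKernel_nonneg hp)]
    exact mul_le_mul_of_nonneg_right
      (hM _ ⟨(abs_nonneg _).trans hp.2.2.1.le, by linarith [hp.2.1, hp.2.2.2]⟩)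
      (waveKernel_nonneg hp)
  · simp [hp]

lemma Isol_eq_integral_prod {t r : ℝ} (ht : 0 < t) (hr : 0 < r) {φ : ℝ → ℝ}
    (hφ : Continuous φ) :
    Isol t r φ = 1 / (Real.pi * √2) *
      ∫ p, (waveDomain t r).indicator (fun p => φ p.2 * waveKernel t r p.1 p.2) p
        ∂(volume.prod volume) := by
  rw [Isol, integral_prod _ (integrable_indicator_mul_waveKernel t hr hφ),
    intervalIntegral.integral_of_le ht.le, integral_Ioc_eq_integral_Ioo,
    ← MeasureTheory.integral_indicator measurableSet_Ioo]
  congr 2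
  ext s
  by_cases hs : s ∈ Ioo 0 t
  · rw [indicator_of_mem hs, indicator_waveDomain_section hs,
      MeasureTheory.integral_indicator measurableSet_Ioo,
      intervalIntegral.integral_of_le (abs_sub_lt_add_of_pos hr hs.1).le,
      integral_Ioc_eq_integral_Ioo]
    simp only [waveKernel, mul_assoc]
  · rw [indicator_of_notMem hs, indicator_waveDomain_section_eq_zero hs]
    simp

lemma Isol_congr {t r : ℝ} (ht : 0 < t) (hr : 0 < r) {φ ψ : ℝ → ℝ}
    (h : ∀ x, 0 ≤ x → φ x = ψ x) : Isol t r φ = Isol t r ψ := by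
  rw [Isol, Isol]
  congr 1
  refine intervalIntegral.integral_congr_ae (Filter.Eventually.of_forall fun s hs => ?_)
  rw [uIoc_of_le ht.le] at hs
  refine intervalIntegral.integral_congr_ae (Filter.Eventually.of_forall fun l hl => ?_)
  rw [uIoc_of_le (abs_sub_lt_add_of_pos hr hs.1).le] at hl
  rw [h l ((abs_nonneg _).trans hl.1.le)]

lemma cosh_sub_mul_cosh_sub (r s l : ℝ) :
    (Real.cosh (r + s) - Real.cosh l) * (Real.cosh l - Real.cosh (r - s)) =
      (Real.cosh (l + r) - Real.cosh s) * (Real.cosh s - Real.cosh (l - r)) := by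
  simp only [Real.cosh_add, Real.cosh_sub]
  linear_combination (Real.cosh l ^ 2 - Real.cosh s ^ 2) * Real.cosh_sq r +
    Real.sinh r ^ 2 * (Real.cosh_sq l - Real.cosh_sq s)

lemma cosh_le_coth_mul_sinh {τ x : ℝ} (hτ : 0 < τ) (hx : τ ≤ x) :
    Real.cosh x ≤ Real.cosh τ / Real.sinh τ * Real.sinh x := by
  have h := Real.sinh_nonneg_iff.2 (sub_nonneg.2 hx)
  rw [Real.sinh_sub] at h
  rw [div_mul_eq_mul_div, le_div_iff₀ (Real.sinh_pos_iff.2 hτ)]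
  linarith

lemma cosh_add_le {τ l r : ℝ} (hτ : 0 < τ) (hl : τ ≤ l) (hr : τ ≤ r) :
    Real.cosh (l + r) ≤
      (1 + (Real.cosh τ / Real.sinh τ) ^ 2) * (Real.sinh l * Real.sinh r) := by
  have h := mul_le_mul (cosh_le_coth_mul_sinh hτ hl) (cosh_le_coth_mul_sinh hτ hr)
    (Real.cosh_pos r).le ((Real.cosh_pos l).le.trans (cosh_le_coth_mul_sinh hτ hl))
  rw [Real.cosh_add]
  linarith

lemma le_waveKernel {τ t r s l : ℝ} (hτ : 0 < τ) (hr : τ ≤ r)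
    (h : (s, l) ∈ waveSubdomain t r) :
    √(Real.sinh l) * (2 / (√(1 + (Real.cosh τ / Real.sinh τ) ^ 2) * √(Real.sinh r))) *
      (Real.sinh s / (Real.cosh t - Real.cosh (l - r))) ≤ waveKernel t r s l := by
  have hD := waveSubdomain_subset t r h
  obtain ⟨h1, h2, h3, h4⟩ := h
  simp only [max_lt_iff] at h1 h2 h3 h4
  obtain ⟨k1, k2, k3⟩ := cosh_factors_pos hD
  have hs : 0 < s := hD.1
  have hC : 0 < 1 + (Real.cosh τ / Real.sinh τ) ^ 2 := by positivity
  have hsl : 0 < Real.sinh l := Real.sinh_pos_iff.2 (by linarith)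
  have hsr : 0 < Real.sinh r := Real.sinh_pos_iff.2 (by linarith)
  have hss : 0 < Real.sinh s := Real.sinh_pos_iff.2 hs
  have hcs := cosh_lt_cosh_of_nonneg (by linarith) h3
  have hd : 0 < Real.cosh t - Real.cosh (l - r) := by linarith
  have hadd := cosh_add_le hτ (by linarith : τ ≤ l) hr
  set C := 1 + (Real.cosh τ / Real.sinh τ) ^ 2
  have hX : (Real.cosh t - Real.cosh s) * (Real.cosh (r + s) - Real.cosh l) *
      (Real.cosh l - Real.cosh (r - s)) ≤
      ((Real.cosh t - Real.cosh (l - r)) / 2) ^ 2 * (C * (Real.sinh l * Real.sinh r)) := by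
    have e : (Real.cosh t - Real.cosh s) * (Real.cosh (r + s) - Real.cosh l) *
      (Real.cosh l - Real.cosh (r - s)) =
        ((Real.cosh t - Real.cosh s) * (Real.cosh s - Real.cosh (l - r))) *
          (Real.cosh (l + r) - Real.cosh s) := by
      rw [mul_assoc, cosh_sub_mul_cosh_sub]; ring
    rw [e]
    have hcl := cosh_lt_cosh_of_nonneg hs.le (by linarith : s < l + r)
    apply mul_le_mul _ (by linarith [Real.cosh_pos s]) (by linarith) (by positivity)
    nlinarith [sq_nonneg (Real.cosh t - Real.cosh s - (Real.cosh s - Real.cosh (l - r)))]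
  have hrp := Real.rpow_le_rpow_of_nonpos (by positivity) hX (by norm_num : (-(1 / 2) : ℝ) ≤ 0)
  rw [rpow_neg_half _ (by positivity), Real.sqrt_mul (by positivity),
    Real.sqrt_sq (by positivity), Real.sqrt_mul hC.le, Real.sqrt_mul hsl.le] at hrp
  refine le_trans (le_of_eq ?_) (mul_le_mul_of_nonneg_left hrp (mul_pos hsl hss).le)
  have q1 := Real.sqrt_pos.2 hC
  have q2 := Real.sqrt_pos.2 hsl
  have q3 := Real.sqrt_pos.2 hsr
  field_simp
  rw [Real.sq_sqrt hsl.le]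

/-- The section of a function supported in `waveSubdomain t r` at a fixed second variable. -/
lemma indicator_waveSubdomain_section {t r l : ℝ} (hl : l ∈ Ioo (max t r) (t + r))
    (f : ℝ × ℝ → ℝ) :
    (fun s => (waveSubdomain t r).indicator f (s, l)) =
      (Ioo (l - r) t).indicator fun s => f (s, l) := by
  ext s
  have : (s, l) ∈ waveSubdomain t r ↔ s ∈ Ioo (l - r) t :=
    ⟨fun h => h.2.2, fun h => ⟨hl.1, hl.2, h⟩⟩
  simp only [indicator, this]

lemma integral_sinh_div_cosh_sub {a b : ℝ} (ha : 0 ≤ a) (hab : a < b) :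
    ∫ s in Ioo a b, Real.sinh s / (Real.cosh b - Real.cosh a) = 1 := by
  have h := cosh_lt_cosh_of_nonneg ha hab
  rw [← integral_Ioc_eq_integral_Ioo, ← intervalIntegral.integral_of_le hab.le,
    intervalIntegral.integral_div,
    integral_eq_sub_of_hasDerivAt (fun x _ => Real.hasDerivAt_cosh x)
      (Real.continuous_sinh.intervalIntegrable _ _)]
  exact div_self (by linarith)

lemma le_integral_prod {τ t r : ℝ} (hτ : 0 < τ) (ht : 0 < t) (hr : τ ≤ r) {φ : ℝ → ℝ}
    (hφ : Continuous φ) (hφ0 : ∀ x, 0 ≤ φ x) :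
    2 / (√(1 + (Real.cosh τ / Real.sinh τ) ^ 2) * √(Real.sinh r)) *
        ∫ l in (max t r)..(t + r), φ l * √(Real.sinh l) ≤
      ∫ p, (waveDomain t r).indicator (fun p => φ p.2 * waveKernel t r p.1 p.2) p
        ∂(volume.prod volume) := by
  set c := 2 / (√(1 + (Real.cosh τ / Real.sinh τ) ^ 2) * √(Real.sinh r))
  have hr0 : 0 < r := hτ.trans_le hr
  set H : ℝ × ℝ → ℝ := (waveSubdomain t r).indicator fun p =>
    φ p.2 * (√(Real.sinh p.2) * c * (Real.sinh p.1 / (Real.cosh t - Real.cosh (p.2 - r)))) with hH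
  have hF := integrable_indicator_mul_waveKernel t hr0 hφ
  have hnonneg (p : ℝ × ℝ) : 0 ≤ H p := by
    refine indicator_nonneg (fun p hp => ?_) p
    have hD := waveSubdomain_subset t r hp
    have h1 := Real.sinh_nonneg_iff.2 hD.1.le
    have h2 : Real.cosh (p.2 - r) < Real.cosh t :=
      cosh_lt_cosh_of_nonneg (by linarith [(max_lt_iff.1 hp.1).2]) (by linarith [hp.2.1])
    have h3 : 0 < Real.cosh t - Real.cosh (p.2 - r) := by linarith
    have := hφ0 p.2
    positivity
  have hle (p : ℝ × ℝ) :
      H p ≤ (waveDomain t r).indicator (fun p => φ p.2 * waveKernel t r p.1 p.2) p := by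
    by_cases hp : p ∈ waveSubdomain t r
    · rw [hH, indicator_of_mem hp, indicator_of_mem (waveSubdomain_subset t r hp)]
      exact mul_le_mul_of_nonneg_left (le_waveKernel hτ hr hp) (hφ0 _)
    · rw [hH, indicator_of_notMem hp]
      exact indicator_nonneg (fun p hp => mul_nonneg (hφ0 _) (waveKernel_nonneg hp)) p
  have hHm : Measurable H := by
    refine Measurable.indicator ?_ (measurableSet_waveSubdomain t r)
    have := hφ.measurable
    fun_prop
  have hHi : Integrable H (volume.prod volume) :=
    hF.mono' hHm.aestronglyMeasurable (Filter.Eventually.of_forall fun p => by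
      rw [Real.norm_of_nonneg (hnonneg p)]; exact hle p)
  refine le_trans (le_of_eq ?_) (integral_mono hHi hF hle)
  have hmax : max t r ≤ t + r := max_le (by linarith) (by linarith)
  rw [integral_prod_symm _ hHi, intervalIntegral.integral_of_le hmax,
    integral_Ioc_eq_integral_Ioo, ← MeasureTheory.integral_const_mul,
    ← MeasureTheory.integral_indicator measurableSet_Ioo]
  congr 1
  ext l
  by_cases hl : l ∈ Ioo (max t r) (t + r)
  · rw [indicator_of_mem hl, hH, indicator_waveSubdomain_section hl,
      MeasureTheory.integral_indicator measurableSet_Ioo]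
    simp only
    rw [MeasureTheory.integral_const_mul, MeasureTheory.integral_const_mul,
      integral_sinh_div_cosh_sub (by linarith [(max_lt_iff.1 hl.1).2]) (by linarith [hl.2])]
    ring
  · rw [indicator_of_notMem hl]
    have : (fun s => H (s, l)) = 0 := by
      ext s
      exact indicator_of_notMem (fun h => hl ⟨h.1, h.2.1⟩) _
    rw [this]
    simp

theorem solution_lower_bound_large_domain (τ₀ : ℝ) (hτ₀ : 0 < τ₀) :
    ∃ C₀ : ℝ, 0 < C₀ ∧ C₀ ≤ 1 ∧
      ∀ φ : ℝ → ℝ, ContinuousOn φ (Set.Ici 0) → (∀ x ∈ Set.Ici (0 : ℝ), 0 ≤ φ x) →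
        ∀ t r : ℝ, 0 < t → τ₀ / 2 < r →
          Isol t r φ ≥
            (C₀ / Real.sqrt (Real.sinh r)) *
              ∫ l in (max t r)..(t + r), φ l * Real.sqrt (Real.sinh l) := by
  have hτ : 0 < τ₀ / 2 := by positivity
  set C := 1 + (Real.cosh (τ₀ / 2) / Real.sinh (τ₀ / 2)) ^ 2 with hC
  have hC1 : 1 ≤ √C := by
    rw [Real.one_le_sqrt, hC]
    linarith [sq_nonneg (Real.cosh (τ₀ / 2) / Real.sinh (τ₀ / 2))]
  have h2 : 1 ≤ √2 := Real.one_le_sqrt.2 (by norm_num)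
  have hpi := Real.pi_gt_three
  refine ⟨1 / (Real.pi * √2) * (2 / √C), by positivity, ?_, ?_⟩
  · have h3 : 2 / √C ≤ 2 := div_le_self (by norm_num) hC1
    have h4 : 1 / (Real.pi * √2) ≤ 1 / 2 :=
      one_div_le_one_div_of_le (by norm_num) (by nlinarith)
    calc 1 / (Real.pi * √2) * (2 / √C) ≤ 1 / 2 * 2 :=
          mul_le_mul h4 h3 (by positivity) (by norm_num)
      _ = 1 := by norm_num
  · intro φ hφ hφ0 t r ht hr
    have hr0 : 0 < r := hτ.trans hr
    set ψ : ℝ → ℝ := fun x => φ (max 0 x) with hψ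
    have hψc : Continuous ψ :=
      hφ.comp_continuous (continuous_const.max continuous_id) fun x => mem_Ici.2 (le_max_left _ _)
    have hψ0 (x : ℝ) : 0 ≤ ψ x := hφ0 _ (mem_Ici.2 (le_max_left _ _))
    have heq (x : ℝ) (hx : 0 ≤ x) : φ x = ψ x := by rw [hψ]; simp only [max_eq_right hx]
    have hmax : max t r ≤ t + r := max_le (by linarith) (by linarith)
    have hint : ∫ l in (max t r)..(t + r), φ l * √(Real.sinh l) =
        ∫ l in (max t r)..(t + r), ψ l * √(Real.sinh l) := by
      refine intervalIntegral.integral_congr fun l hl => ?_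
      rw [uIcc_of_le hmax] at hl
      simp only [heq l (ht.le.trans ((le_max_left t r).trans hl.1))]
    rw [ge_iff_le, Isol_congr ht hr0 heq, hint, Isol_eq_integral_prod ht hr0 hψc]
    refine le_trans (le_of_eq ?_)
      (mul_le_mul_of_nonneg_left (le_integral_prod hτ ht hr.le hψc hψ0) (by positivity))
    rw [← hC, ← mul_assoc]
    congr 1
    rw [mul_div_assoc, div_div]
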